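/- (Quantitative inverse function theorem.) Let X and Y be Banach spaces, A ⊆ X an open set, ℱ : A → Y continuously Fréchet differentiable, x₀ ∈ A, and η, σ, L > 0. Assume: (1) ‖ℱ(x₀)‖_Y ≤ η, the Fréchet derivative Dℱ(x₀) : X → Y is a bijective bounded linear map, and ‖Dℱ(x₀)⁻¹‖_{L(Y,X)} ≤ σ; (2) the closed ball B̄_X(x₀, 2ησ) is contained in A; (3) ‖Dℱ(x₁) − Dℱ(x₂)‖_{L(X,Y)} ≤ L ‖x₁ − x₂‖_X for all x₁, x₂ ∈ B̄_X(x₀, 2ησ); (4) 2Lσ²η < 1. Then there exists x ∈ X with ℱ(x) = 0 and ‖x − x₀‖_X < 2ησ. -/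

import Mathlib

/-!
If `G` is a bounded right inverse of `F' x₀`, then `y ↦ F (x₀ + G y)` has derivative the identity
at `0`. Its zeros are the fixed points of `S y = y - F (x₀ + G y)`, whose derivative has norm at
most `L * σ ^ 2 * ‖y‖`; hence `S` is a contraction on the closed ball of radius `r = 2 * η`.
It maps this closed ball into the open one because integrating the linear bound on the derivative
along segments gains a factor `1 / 2`:
`‖S y‖ ≤ η + L * σ ^ 2 * r ^ 2 / 2 < η + r / 2 = r`.
-/

open Function Metric Set

section FixedPoint

variable {E F : Type*} [NormedAddCommGroup E] [NormedSpace ℝ E]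
  [NormedAddCommGroup F] [NormedSpace ℝ F]

theorem norm_image_sub_le_of_norm_hasFDerivWithin_le_mul_norm_sub
    {f : E → F} {f' : E → E →L[ℝ] F} {s : Set E} {a x : E} {K : ℝ} (hs : StarConvex ℝ a s)
    (hf : ∀ z ∈ s, HasFDerivWithinAt f (f' z) s z) (bound : ∀ z ∈ s, ‖f' z‖ ≤ K * ‖z - a‖)
    (hx : x ∈ s) : ‖f x - f a‖ ≤ K * ‖x - a‖ ^ 2 / 2 := by
  let γ : ℝ → E := AffineMap.lineMap a x
  have hγs : MapsTo γ (Icc 0 1) s := fun t ht =>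
    hs.segment_subset hx (lineMap_mem_segment ℝ a x ht)
  have hγa (t : ℝ) : γ t - a = t • (x - a) := AffineMap.lineMap_vsub_left a x t
  have hfγ : ∀ t ∈ Icc (0 : ℝ) 1,
      HasDerivWithinAt (fun t => f (γ t) - f a) (f' (γ t) (x - a)) (Icc 0 1) t := fun t ht =>
    ((hf _ (hγs ht)).comp_hasDerivWithinAt t AffineMap.hasDerivWithinAt_lineMap hγs).sub_const _
  have hB (t : ℝ) :
      HasDerivAt (fun t => K * ‖x - a‖ ^ 2 / 2 * t ^ 2) (K * ‖x - a‖ ^ 2 * t) t :=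
    ((hasDerivAt_pow 2 t).const_mul _).congr_deriv (by push_cast; ring)
  have hB_bound : ∀ t ∈ Ico (0 : ℝ) 1, ‖f' (γ t) (x - a)‖ ≤ K * ‖x - a‖ ^ 2 * t := by
    intro t ht
    calc ‖f' (γ t) (x - a)‖
        ≤ K * ‖γ t - a‖ * ‖x - a‖ :=
          (f' (γ t)).le_of_opNorm_le (bound _ (hγs (Ico_subset_Icc_self ht))) _
      _ = K * ‖x - a‖ ^ 2 * t := by
          rw [hγa, norm_smul, Real.norm_of_nonneg ht.1]
          ring
  have := image_norm_le_of_norm_deriv_right_le_deriv_boundary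
    (fun t ht => (hfγ t ht).continuousWithinAt)
    (fun t ht => (hfγ t (Ico_subset_Icc_self ht)).mono_of_mem_nhdsWithin
      (Icc_mem_nhdsGE_of_mem ht))
    (by simp [γ]) hB hB_bound (right_mem_Icc.2 zero_le_one)
  simpa [γ] using this

theorem exists_isFixedPt_of_mapsTo_of_lipschitzOnWith {α : Type*} [MetricSpace α] {f : α → α}
    {s : Set α} {K : NNReal} (hs : IsComplete s) (hne : s.Nonempty) (hmaps : MapsTo f s s)
    (hf : LipschitzOnWith K f s) (hK : K < 1) : ∃ x ∈ s, IsFixedPt f x := by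
  obtain ⟨a, ha⟩ := hne
  obtain ⟨x, hx, hfix, -⟩ := ContractingWith.exists_fixedPoint' hs hmaps
    ⟨hK, hf.mapsToRestrict hmaps⟩ ha (edist_ne_top _ _)
  exact ⟨x, hx, hfix⟩

theorem exists_isFixedPt_mem_ball_of_norm_hasFDerivWithin_le_mul_norm_sub [CompleteSpace E]
    {f : E → E} {f' : E → E →L[ℝ] E} {a : E} {r K : ℝ} (hr : 0 < r) (hK : 0 ≤ K)
    (hKr : K * r < 1) (hf : ∀ x ∈ closedBall a r, HasFDerivWithinAt f (f' x) (closedBall a r) x)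
    (bound : ∀ x ∈ closedBall a r, ‖f' x‖ ≤ K * ‖x - a‖) (ha : ‖f a - a‖ ≤ r / 2) :
    ∃ x ∈ ball a r, IsFixedPt f x := by
  have hconv := convex_closedBall a r
  have ha_mem : a ∈ closedBall a r := mem_closedBall_self hr.le
  have hmaps : MapsTo f (closedBall a r) (ball a r) := by
    intro x hx
    have hxr : ‖x - a‖ ≤ r := mem_closedBall_iff_norm.1 hx
    rw [mem_ball_iff_norm]
    calc ‖f x - a‖ ≤ ‖f x - f a‖ + ‖f a - a‖ := norm_sub_le_norm_sub_add_norm_sub ..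
      _ ≤ K * ‖x - a‖ ^ 2 / 2 + r / 2 := add_le_add
          (norm_image_sub_le_of_norm_hasFDerivWithin_le_mul_norm_sub
            (hconv.starConvex ha_mem) hf bound hx) ha
      _ ≤ K * r ^ 2 / 2 + r / 2 := by gcongr
      _ < r := by nlinarith
  have hlip : LipschitzOnWith ⟨K * r, by positivity⟩ f (closedBall a r) :=
    hconv.lipschitzOnWith_of_nnnorm_hasFDerivWithin_le hf fun x hx =>
      (bound x hx).trans (mul_le_mul_of_nonneg_left (mem_closedBall_iff_norm.1 hx) hK)
  obtain ⟨x, hx, hfix⟩ := exists_isFixedPt_of_mapsTo_of_lipschitzOnWith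
    isClosed_closedBall.isComplete ⟨a, ha_mem⟩ (hmaps.mono_right ball_subset_closedBall) hlip hKr
  exact ⟨x, hfix ▸ hmaps hx, hfix⟩

end FixedPoint

theorem quantitative_inverse_function_theorem_general
    {X Y : Type*} [NormedAddCommGroup X] [NormedSpace ℝ X]
    [NormedAddCommGroup Y] [NormedSpace ℝ Y] [CompleteSpace Y]
    {F : X → Y} {F' : X → X →L[ℝ] Y} {G : Y →L[ℝ] X} {x₀ : X} {η σ L : ℝ}
    (hη : 0 < η) (hσ : 0 < σ) (hL : 0 ≤ L)
    (hderiv : ∀ x ∈ closedBall x₀ (2 * η * σ),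
      HasFDerivWithinAt F (F' x) (closedBall x₀ (2 * η * σ)) x)
    (hres : ‖F x₀‖ ≤ η) (hG : RightInverse G (F' x₀)) (hGσ : ‖G‖ ≤ σ)
    (hLip : ∀ x ∈ closedBall x₀ (2 * η * σ), ‖F' x - F' x₀‖ ≤ L * ‖x - x₀‖)
    (hcond : 2 * L * σ ^ 2 * η < 1) :
    ∃ x : X, F x = 0 ∧ ‖x - x₀‖ < 2 * η * σ := by
  let p : Y → X := fun y => x₀ + G y
  let S' : Y → Y →L[ℝ] Y := fun y => .id ℝ Y - (F' (p y)).comp G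
  have hp_norm (y : Y) : ‖p y - x₀‖ ≤ σ * ‖y‖ := by
    simpa only [p, add_sub_cancel_left] using G.le_of_opNorm_le hGσ y
  have hp_maps : MapsTo p (closedBall 0 (2 * η)) (closedBall x₀ (2 * η * σ)) := by
    intro y hy
    rw [mem_closedBall_zero_iff] at hy
    rw [mem_closedBall_iff_norm]
    nlinarith [hp_norm y]
  have hS : ∀ y ∈ closedBall 0 (2 * η),
      HasFDerivWithinAt (fun y => y - F (p y)) (S' y) (closedBall 0 (2 * η)) y := fun y hy =>
    (hasFDerivWithinAt_id y _).sub
      ((hderiv _ (hp_maps hy)).comp y (G.hasFDerivWithinAt.const_add x₀) hp_maps)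
  have hS'_bound : ∀ y ∈ closedBall 0 (2 * η), ‖S' y‖ ≤ L * σ ^ 2 * ‖y - 0‖ := by
    intro y hy
    have hS'_eq : S' y = (F' x₀ - F' (p y)).comp G := by
      ext v
      simp [S', hG v]
    calc ‖S' y‖ ≤ ‖F' (p y) - F' x₀‖ * ‖G‖ := by
          rw [hS'_eq, norm_sub_rev]
          exact ContinuousLinearMap.opNorm_comp_le _ _
      _ ≤ L * (σ * ‖y‖) * σ := by
          gcongr
          exact (hLip _ (hp_maps hy)).trans (by gcongr; exact hp_norm y)
      _ = L * σ ^ 2 * ‖y - 0‖ := by rw [sub_zero]; ring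
  obtain ⟨y, hy, hfix⟩ := exists_isFixedPt_mem_ball_of_norm_hasFDerivWithin_le_mul_norm_sub
    (by positivity) (by positivity) (by linarith) hS hS'_bound (by simpa [p] using hres)
  refine ⟨p y, sub_eq_self.1 hfix, ?_⟩
  rw [mem_ball_zero_iff] at hy
  nlinarith [hp_norm y]

/-- Quantitative inverse function theorem. -/
theorem quantitative_inverse_function_theorem
    {X Y : Type*} [NormedAddCommGroup X] [NormedSpace ℝ X] [CompleteSpace X]
    [NormedAddCommGroup Y] [NormedSpace ℝ Y] [CompleteSpace Y]
    (A : Set X) (hA : IsOpen A) (F : X → Y) (F' : X → X →L[ℝ] Y)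
    (hderiv : ∀ x ∈ A, HasFDerivAt F (F' x) x) (hcont : ContinuousOn F' A)
    (x₀ : X) (hx₀ : x₀ ∈ A) (η σ L : ℝ) (hη : 0 < η) (hσ : 0 < σ) (hL : 0 < L)
    (hres : ‖F x₀‖ ≤ η)
    (e : X ≃L[ℝ] Y) (he : (e : X →L[ℝ] Y) = F' x₀)
    (hinv : ‖(e.symm : Y →L[ℝ] X)‖ ≤ σ)
    (hball : Metric.closedBall x₀ (2 * η * σ) ⊆ A)
    (hLip : ∀ x₁ ∈ Metric.closedBall x₀ (2 * η * σ),
      ∀ x₂ ∈ Metric.closedBall x₀ (2 * η * σ), ‖F' x₁ - F' x₂‖ ≤ L * ‖x₁ - x₂‖)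
    (hcond : 2 * L * σ ^ 2 * η < 1) :
    ∃ x : X, F x = 0 ∧ ‖x - x₀‖ < 2 * η * σ := by
  have hG : RightInverse e.symm (F' x₀) := he ▸ e.apply_symm_apply
  exact quantitative_inverse_function_theorem_general hη hσ hL.le
    (fun x hx => (hderiv x (hball hx)).hasFDerivWithinAt) hres hG hinv
    (fun x hx => hLip x hx x₀ (mem_closedBall_self (by positivity))) hcond
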